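/- arXiv:2010.15204 — 2 statements merged into one kernel-verified Lean document; each statement's English description precedes it below -/
import Mathlib

section
/- Let γ : [a,b] → ℝ³ be a closed rectifiable curve (γ(a) = γ(b)) of length L, and let x ∈ ℝ³ and r > 0 be such that the sphere S(x,r) = {y ∈ ℝ³ : |y − x| = r} is contained in the convex hull of γ([a,b]) and |γ(t) − x| ≥ r for all t ∈ [a,b]. Then L ≥ 4πr. -/
open MeasureTheory Set Real
open scoped ENNReal NNReal RealInnerProductSpace

noncomputable section

abbrev E3 := EuclideanSpace ℝ (Fin 3)

/-!
The sphere sees a point `A` in the directions `p` with `1 ≤ ⟪p, A⟫`; let `K A` be the part of the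
unit ball in these directions. Suppose that the convex hull of a closed polygon contains the unit
sphere. Every direction `p` sees some vertex, and a vertex seen from `-p` is not seen from `p`, so
along the polygon almost every point of the ball both enters and leaves the sets `K`: the volumes of
`K A ∆ K B` over the edges `A B` add up to at least twice the volume of the ball, `8 * π / 3`.

Cylindrical coordinates about the axis orthogonal to `A` and `B` show that this volume is exactly
`2 / 3 * ‖B - A‖` minus the increment along the edge of a potential that depends on the current
point only through its norm and its elevation in the edge direction, and increases with the
elevation. If the polygon is shortest among those with a given number of vertices, then pushing a
vertex radially outwards does not shorten it, so the potential does not increase where the edge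
direction changes. Its total increment along the edges is then nonnegative, and the length is at
least `3 / 2 * (8 * π / 3) = 4 * π`.

Polygons inscribed in a curve reach beyond all tangent planes of any slightly smaller sphere.
-/

open NormedSpace
open scoped Topology

/-! ### Sectors of a meridian half-disc -/

/-- The measure `r dr dz` on the half-plane `{(r, z) | 0 < r}`, so that Lebesgue measure on
`ℝ³` is `dθ` times it in cylindrical coordinates. The half-plane `r ≤ 0` is null because
`ENNReal.ofReal` truncates negative densities to `0`. -/
def meridianMeasure : Measure (ℝ × ℝ) :=
  volume.withDensity fun p => ENNReal.ofReal p.1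

/-- The part of the open half-disc `{(r, z) | 0 < r, r² + z² < 1}` whose points have polar angle
`ψ` with `1 ≤ m * cos ψ`. -/
def sector (m : ℝ) : Set (ℝ × ℝ) :=
  {p | 0 < p.1 ∧ p.1 ^ 2 + p.2 ^ 2 < 1 ∧ √(p.1 ^ 2 + p.2 ^ 2) ≤ p.1 * m}

/-- The `meridianMeasure` of `sector m`. For `m ≤ 1` the maximum makes it vanish. -/
def sectorMass (m : ℝ) : ℝ := 2 / 3 * √(1 - (max 1 m)⁻¹ ^ 2)

lemma measurableSet_sector (m : ℝ) : MeasurableSet (sector m) := by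
  have h₀ : MeasurableSet {p : ℝ × ℝ | 0 < p.1} := measurableSet_lt (by fun_prop) (by fun_prop)
  have h₁ : MeasurableSet {p : ℝ × ℝ | p.1 ^ 2 + p.2 ^ 2 < 1} :=
    measurableSet_lt (by fun_prop) (by fun_prop)
  have h₂ : MeasurableSet {p : ℝ × ℝ | √(p.1 ^ 2 + p.2 ^ 2) ≤ p.1 * m} :=
    measurableSet_le (by fun_prop) (by fun_prop)
  exact h₀.inter (h₁.inter h₂)

lemma sector_mono : Monotone sector := fun _ _ hm _ hp =>
  ⟨hp.1, hp.2.1, hp.2.2.trans (mul_le_mul_of_nonneg_left hm hp.1.le)⟩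

lemma sectorMass_nonneg (m : ℝ) : 0 ≤ sectorMass m := by
  unfold sectorMass; positivity

lemma sectorMass_of_le_one {m : ℝ} (hm : m ≤ 1) : sectorMass m = 0 := by
  simp [sectorMass, max_eq_left hm]

lemma continuous_sectorMass : Continuous sectorMass := by
  unfold sectorMass
  exact continuous_const.mul <| continuous_sqrt.comp <| continuous_const.sub <|
    ((continuous_const.max continuous_id).inv₀ fun m =>
      (zero_lt_one.trans_le (le_max_left 1 m)).ne').pow 2

lemma sectorMass_mono : Monotone sectorMass := fun m m' h => by
  unfold sectorMass
  have : 0 < max 1 m := zero_lt_one.trans_le (le_max_left 1 m)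
  gcongr

lemma two_mul_sectorMass_le {m : ℝ} (hm : 0 ≤ m) : 2 * sectorMass m ≤ 2 / 3 * m := by
  rcases le_total m 1 with h | h
  · rw [sectorMass_of_le_one h]; linarith
  have hm₀ : 0 < m := by linarith
  rw [sectorMass, max_eq_right h]
  have hs : √(1 - m⁻¹ ^ 2) ^ 2 = 1 - m⁻¹ ^ 2 :=
    sq_sqrt (sub_nonneg.2 (pow_le_one₀ (by positivity) (inv_le_one_of_one_le₀ h)))
  have amgm : 2 * m⁻¹ * √(1 - m⁻¹ ^ 2) ≤ 1 := by
    linarith [two_mul_le_add_sq m⁻¹ √(1 - m⁻¹ ^ 2)]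
  have : 2 * √(1 - m⁻¹ ^ 2) ≤ m := by
    calc 2 * √(1 - m⁻¹ ^ 2) = m * (2 * m⁻¹ * √(1 - m⁻¹ ^ 2)) := by field_simp [hm₀.ne']
      _ ≤ m := mul_le_of_le_one_right hm amgm
  linarith

lemma sector_eq_empty {m : ℝ} (hm : m < 1) : sector m = ∅ := by
  refine eq_empty_of_forall_notMem fun p ⟨h₀, _, h⟩ => ?_
  have : p.1 ≤ √(p.1 ^ 2 + p.2 ^ 2) := le_sqrt_of_sq_le (by nlinarith)
  nlinarith

lemma polarCoord_symm_mem_sector_iff {m : ℝ} (hm : 1 ≤ m) {p : ℝ × ℝ}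
    (hp : p ∈ polarCoord.target) :
    polarCoord.symm p ∈ sector m ↔
      p ∈ Ioo (0 : ℝ) 1 ×ˢ Icc (-arccos m⁻¹) (arccos m⁻¹) := by
  obtain ⟨R, ψ⟩ := p
  obtain ⟨hR, hψ₁, hψ₂⟩ : 0 < R ∧ -π < ψ ∧ ψ < π := by simpa using hp
  have hm₀ : 0 < m := by linarith
  have hnorm : (R * cos ψ) ^ 2 + (R * sin ψ) ^ 2 = R ^ 2 := by
    linear_combination R ^ 2 * sin_sq_add_cos_sq ψ
  have hangle : 1 ≤ cos ψ * m ↔ |ψ| ≤ arccos m⁻¹ := by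
    rw [← inv_le_iff_one_le_mul₀ hm₀, ← cos_abs,
      ← strictAntiOn_arccos.le_iff_ge (cos_mem_Icc _)
        ⟨by linarith [inv_pos.2 hm₀], inv_le_one_of_one_le₀ hm⟩,
      arccos_cos (abs_nonneg ψ) (abs_le.2 ⟨hψ₁.le, hψ₂.le⟩)]
  have hcos : 1 ≤ cos ψ * m → 0 < cos ψ := fun h =>
    pos_of_mul_pos_left (by linarith) hm₀.le
  simp only [sector, mem_ofPred_eq, polarCoord_symm_apply, hnorm, sqrt_sq hR.le, mem_prod, mem_Ioo,
    mem_Icc, ← abs_le, ← hangle, mul_assoc, hR, true_and, mul_pos_iff_of_pos_left,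
    sq_lt_one_iff₀ hR.le, le_mul_iff_one_le_right hR]
  exact ⟨fun h => h.2, fun h => ⟨hcos h.2, h⟩⟩

lemma lintegral_sq_mul_cos_Ioo_prod_Icc {α : ℝ} (hα₀ : 0 ≤ α) (hα : α ≤ π / 2) :
    ∫⁻ p in Ioo (0 : ℝ) 1 ×ˢ Icc (-α) α, ENNReal.ofReal (p.1 ^ 2 * cos p.2) =
      ENNReal.ofReal (2 / 3 * sin α) := by
  have hint : IntegrableOn (fun p : ℝ × ℝ => p.1 ^ 2 * cos p.2) (Ioo 0 1 ×ˢ Icc (-α) α) :=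
    (ContinuousOn.integrableOn_compact (isCompact_Icc.prod isCompact_Icc)
      (by fun_prop)).mono_set (prod_mono Ioo_subset_Icc_self subset_rfl)
  rw [← ofReal_integral_eq_lintegral_ofReal hint]
  · rw [Measure.volume_eq_prod, setIntegral_prod_mul (fun x : ℝ => x ^ 2) cos,
      ← integral_Ioc_eq_integral_Ioo, integral_Icc_eq_integral_Ioc,
      ← intervalIntegral.integral_of_le zero_le_one,
      ← intervalIntegral.integral_of_le (by linarith), integral_cos, integral_pow, sin_neg]
    congr 1; norm_num; ring
  · filter_upwards [ae_restrict_mem (measurableSet_Ioo.prod measurableSet_Icc)] with p hp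
    exact mul_nonneg (sq_nonneg _) (cos_nonneg_of_mem_Icc
      ⟨by linarith [hp.2.1], by linarith [hp.2.2]⟩)

lemma meridianMeasure_sector (m : ℝ) :
    meridianMeasure (sector m) = ENNReal.ofReal (sectorMass m) := by
  rcases lt_or_ge m 1 with hm | hm
  · simp [sector_eq_empty hm, sectorMass_of_le_one hm.le]
  set α := arccos m⁻¹
  set P := Ioo (0 : ℝ) 1 ×ˢ Icc (-α) α
  have hP : MeasurableSet P := measurableSet_Ioo.prod measurableSet_Icc
  have hα₀ : 0 ≤ α := arccos_nonneg _
  have hα : α ≤ π / 2 := arccos_le_pi_div_two.2 (by positivity)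
  have hPt : P ⊆ polarCoord.target := fun p ⟨h₁, h₂⟩ =>
    ⟨h₁.1, by linarith [h₂.1, pi_pos], by linarith [h₂.2, pi_pos]⟩
  rw [meridianMeasure, withDensity_apply _ (measurableSet_sector m),
    ← lintegral_indicator (measurableSet_sector m), ← lintegral_comp_polarCoord_symm]
  calc _ = ∫⁻ p in polarCoord.target,
            P.indicator (fun p => ENNReal.ofReal (p.1 ^ 2 * cos p.2)) p := by
        refine setLIntegral_congr_fun polarCoord.open_target.measurableSet fun p hp => ?_
        have hR : 0 ≤ p.1 := hp.1.le
        by_cases hpP : p ∈ P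
        · have := (polarCoord_symm_mem_sector_iff hm hp).2 hpP
          rw [indicator_of_mem this, indicator_of_mem hpP, smul_eq_mul, ← ENNReal.ofReal_mul hR,
            polarCoord_symm_apply]
          ring_nf
        · have := mt (polarCoord_symm_mem_sector_iff hm hp).1 hpP
          simp only [indicator_of_notMem this, indicator_of_notMem hpP, smul_zero]
    _ = ENNReal.ofReal (sectorMass m) := by
        rw [setLIntegral_indicator hP, inter_eq_left.2 hPt,
          lintegral_sq_mul_cos_Ioo_prod_Icc hα₀ hα, sin_arccos, sectorMass, max_eq_right hm]

lemma meridianMeasure_symmDiff_sector (m m' : ℝ) :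
    meridianMeasure (symmDiff (sector m) (sector m')) =
      ENNReal.ofReal |sectorMass m - sectorMass m'| := by
  wlog h : m ≤ m' generalizing m m'
  · rw [symmDiff_comm, abs_sub_comm]; exact this m' m (le_of_not_ge h)
  rw [symmDiff_of_le (sector_mono h), measure_sdiff (sector_mono h)
      (measurableSet_sector m).nullMeasurableSet (by simp [meridianMeasure_sector]),
    meridianMeasure_sector, meridianMeasure_sector, ← ENNReal.ofReal_sub _ (sectorMass_nonneg m),
    abs_sub_comm, abs_of_nonneg (sub_nonneg.2 (sectorMass_mono h))]

/-- For `0 ≤ ρ` and `|β| ≤ π / 2`, the difference of the integrals of `sectorMass (ρ * cos (θ - β))`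
over the half-turns `0 ≤ θ ≤ π` and `-π ≤ θ ≤ 0`. -/
def flux (ρ β : ℝ) : ℝ := 2 * ∫ φ in (0 : ℝ)..β, sectorMass (ρ * cos φ)

/-- The quantity that grows along an edge by two thirds of its length minus the volume swept by
visible cones, `ρ` and `β` being the norm and the elevation of a moving point. -/
def potential (ρ β : ℝ) : ℝ := 2 / 3 * (ρ * sin β) - flux ρ β

lemma intervalIntegrable_sectorMass_mul_cos (ρ u v : ℝ) :
    IntervalIntegrable (fun φ => sectorMass (ρ * cos φ)) volume u v :=
  (continuous_sectorMass.comp (by fun_prop)).intervalIntegrable u v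

lemma potential_monotoneOn {ρ : ℝ} (hρ : 0 ≤ ρ) :
    MonotoneOn (potential ρ) (Icc (-(π / 2)) (π / 2)) := by
  intro β₁ h₁ β₂ h₂ h
  have hbound : ∫ φ in β₁..β₂, 2 * sectorMass (ρ * cos φ) ≤ ∫ φ in β₁..β₂, 2 / 3 * (ρ * cos φ) := by
    refine intervalIntegral.integral_mono_on h
      ((intervalIntegrable_sectorMass_mul_cos ρ β₁ β₂).const_mul 2)
      (Continuous.intervalIntegrable (by fun_prop) _ _) fun φ hφ => two_mul_sectorMass_le ?_
    exact mul_nonneg hρ (cos_nonneg_of_mem_Icc ⟨h₁.1.trans hφ.1, hφ.2.trans h₂.2⟩)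
  simp only [intervalIntegral.integral_const_mul, integral_cos] at hbound
  have hadj := intervalIntegral.integral_add_adjacent_intervals
    (intervalIntegrable_sectorMass_mul_cos ρ 0 β₁) (intervalIntegrable_sectorMass_mul_cos ρ β₁ β₂)
  unfold potential flux
  linarith

lemma flux_eq_integral_sub_integral {ρ β : ℝ} (hρ : 0 ≤ ρ) (hβ : |β| ≤ π / 2) :
    (∫ θ in (0 : ℝ)..π, sectorMass (ρ * cos (θ - β))) -
      ∫ θ in (-π)..0, sectorMass (ρ * cos (θ - β)) = flux ρ β := by
  obtain ⟨hβ₁, hβ₂⟩ := abs_le.1 hβ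
  set h : ℝ → ℝ := fun φ => sectorMass (ρ * cos φ) with h_def
  have hint := intervalIntegrable_sectorMass_mul_cos ρ
  have heven (φ : ℝ) : h (-φ) = h φ := by simp [h_def]
  have hback : ∫ φ in (π - β)..(π + β), h φ = 0 := by
    refine (intervalIntegral.integral_congr fun φ hφ => ?_).trans intervalIntegral.integral_zero
    have hφ' := uIcc_subset_Icc (a₂ := π / 2) (b₂ := π + π / 2) ⟨by linarith, by linarith⟩
      ⟨by linarith, by linarith⟩ hφ
    refine sectorMass_of_le_one ((mul_nonpos_of_nonneg_of_nonpos hρ ?_).trans zero_le_one)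
    exact cos_nonpos_of_pi_div_two_le_of_le hφ'.1 hφ'.2
  have hreflect (u v : ℝ) : ∫ φ in (-v)..(-u), h φ = ∫ φ in u..v, h φ := by
    simp only [← intervalIntegral.integral_comp_neg, heven]
  have hsymm : ∫ φ in (-β)..0, h φ = ∫ φ in (0 : ℝ)..β, h φ := by simpa using hreflect 0 β
  calc (∫ θ in (0 : ℝ)..π, h (θ - β)) - ∫ θ in (-π)..0, h (θ - β)
      = (∫ φ in (-β)..(π - β), h φ) - ∫ φ in β..(π + β), h φ := by
        rw [intervalIntegral.integral_comp_sub_right h, intervalIntegral.integral_comp_sub_right h,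
          zero_sub, ← neg_add', hreflect]
    _ = (∫ φ in (-β)..β, h φ) - ∫ φ in (π - β)..(π + β), h φ :=
        intervalIntegral.integral_interval_sub_interval_comm (hint _ _) (hint _ _) (hint _ _)
    _ = flux ρ β := by
        rw [hback, ← intervalIntegral.integral_add_adjacent_intervals (hint (-β) 0) (hint 0 β),
          hsymm, flux]
        ring

lemma integral_abs_sectorMass_sub {ρ ρ' β β' : ℝ} (hρ : 0 ≤ ρ) (hρ' : 0 ≤ ρ') (hβ : |β| ≤ π / 2)
    (hβ' : |β'| ≤ π / 2) (hcos : ρ * cos β = ρ' * cos β') (hsin : ρ * sin β ≤ ρ' * sin β') :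
    ∫ θ in (-π)..π, |sectorMass (ρ * cos (θ - β)) - sectorMass (ρ' * cos (θ - β'))| =
      flux ρ' β' - flux ρ β := by
  have hcont (ρ β : ℝ) : Continuous fun θ => sectorMass (ρ * cos (θ - β)) :=
    continuous_sectorMass.comp (by fun_prop)
  have hint (ρ β u v : ℝ) := (hcont ρ β).intervalIntegrable (μ := volume) u v
  have habs (u v : ℝ) : IntervalIntegrable
      (fun θ => |sectorMass (ρ * cos (θ - β)) - sectorMass (ρ' * cos (θ - β'))|) volume u v :=
    ((hcont ρ β).sub (hcont ρ' β')).abs.intervalIntegrable u v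
  have hgap (θ : ℝ) : ρ' * cos (θ - β') - ρ * cos (θ - β) =
      (ρ' * sin β' - ρ * sin β) * sin θ := by
    rw [cos_sub, cos_sub]; linear_combination -cos θ * hcos
  have hupper : ∫ θ in (0 : ℝ)..π, |sectorMass (ρ * cos (θ - β)) - sectorMass (ρ' * cos (θ - β'))| =
      ∫ θ in (0 : ℝ)..π, (sectorMass (ρ' * cos (θ - β')) - sectorMass (ρ * cos (θ - β))) := by
    refine intervalIntegral.integral_congr fun θ hθ => ?_
    rw [uIcc_of_le pi_pos.le] at hθ
    have := mul_nonneg (sub_nonneg.2 hsin) (sin_nonneg_of_mem_Icc hθ)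
    rw [abs_sub_comm, abs_of_nonneg (sub_nonneg.2 (sectorMass_mono (by linarith [hgap θ])))]
  have hlower : ∫ θ in (-π)..0, |sectorMass (ρ * cos (θ - β)) - sectorMass (ρ' * cos (θ - β'))| =
      ∫ θ in (-π)..0, (sectorMass (ρ * cos (θ - β)) - sectorMass (ρ' * cos (θ - β'))) := by
    refine intervalIntegral.integral_congr fun θ hθ => ?_
    rw [uIcc_of_le (by linarith [pi_pos])] at hθ
    have := mul_nonpos_of_nonneg_of_nonpos (sub_nonneg.2 hsin)
      (sin_nonpos_of_nonpos_of_neg_pi_le hθ.2 hθ.1)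
    rw [abs_of_nonneg (sub_nonneg.2 (sectorMass_mono (by linarith [hgap θ])))]
  rw [← intervalIntegral.integral_add_adjacent_intervals (habs (-π) 0) (habs 0 π), hupper, hlower,
    intervalIntegral.integral_sub (hint _ _ _ _) (hint _ _ _ _),
    intervalIntegral.integral_sub (hint _ _ _ _) (hint _ _ _ _),
    ← flux_eq_integral_sub_integral hρ hβ, ← flux_eq_integral_sub_integral hρ' hβ']
  ring

/-! ### Volumes of visible cones -/

lemma measurePreserving_inner_orthonormalBasis (b : OrthonormalBasis (Fin 3) ℝ E3) :
    MeasurePreserving fun x : E3 => ((⟪b 2, x⟫, ⟪b 0, x⟫, ⟪b 1, x⟫) : ℝ × ℝ × ℝ) := by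
  have hsplit := ((MeasurePreserving.id volume).prod (volume_preserving_finTwoArrow ℝ)).comp
    (volume_preserving_piFinSuccAbove (fun _ : Fin 3 => ℝ) 2)
  convert! (hsplit.comp (PiLp.volume_preserving_ofLp (Fin 3))).comp b.measurePreserving_repr
    using 1
  funext x
  simp only [← b.repr_apply_apply]
  rfl

lemma meridianMeasure_apply {t : Set (ℝ × ℝ)} (ht : MeasurableSet t) :
    meridianMeasure t =
      ∫⁻ r in Ioi 0, ∫⁻ z, ENNReal.ofReal r * t.indicator 1 (r, z) := by
  have hdensity (p : ℝ × ℝ) : t.indicator (fun p => ENNReal.ofReal p.1) p =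
      ENNReal.ofReal p.1 * t.indicator 1 p := by
    by_cases hp : p ∈ t <;> simp [hp]
  have hmeas : Measurable fun p : ℝ × ℝ => ENNReal.ofReal p.1 * t.indicator 1 p :=
    (by fun_prop : Measurable fun p : ℝ × ℝ => ENNReal.ofReal p.1).mul (measurable_one.indicator ht)
  rw [setLIntegral_eq_of_support_subset, meridianMeasure, withDensity_apply _ ht,
    ← lintegral_indicator ht, lintegral_congr hdensity, Measure.volume_eq_prod,
    lintegral_prod _ hmeas.aemeasurable]
  refine Function.support_subset_iff'.2 fun r hr => ?_
  simp [ENNReal.ofReal_of_nonpos (not_lt.1 hr)]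

lemma volume_eq_lintegral_meridianMeasure (b : OrthonormalBasis (Fin 3) ℝ E3) {s : Set E3}
    (hs : MeasurableSet s) :
    volume s = ∫⁻ θ in Ioo (-π) π, meridianMeasure
      {p | (p.1 * cos θ) • b 0 + (p.1 * sin θ) • b 1 + p.2 • b 2 ∈ s} := by
  set T : Set (ℝ × ℝ × ℝ) := {q | q.2.1 • b 0 + q.2.2 • b 1 + q.1 • b 2 ∈ s}
  have hT : MeasurableSet T := hs.preimage (by fun_prop)
  have hsT : s = (fun x => (⟪b 2, x⟫, ⟪b 0, x⟫, ⟪b 1, x⟫)) ⁻¹' T := by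
    ext x
    have := b.sum_repr' x
    rw [Fin.sum_univ_three] at this
    simp [T, this]
  set F : ℝ → ℝ × ℝ → ℝ≥0∞ := fun z p =>
    ENNReal.ofReal p.1 * T.indicator 1 (z, p.1 * cos p.2, p.1 * sin p.2)
  have hF : Measurable (Function.uncurry F) :=
    (by fun_prop : Measurable fun x : ℝ × ℝ × ℝ => ENNReal.ofReal x.2.1).mul
      ((measurable_one.indicator hT).comp (by fun_prop))
  have hslice (θ : ℝ) : ∫⁻ r in Ioi 0, ∫⁻ z, F z (r, θ) = meridianMeasure
      {p | (p.1 * cos θ) • b 0 + (p.1 * sin θ) • b 1 + p.2 • b 2 ∈ s} :=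
    (meridianMeasure_apply <| hs.preimage
      (by fun_prop : Measurable fun p : ℝ × ℝ =>
        (p.1 * cos θ) • b 0 + (p.1 * sin θ) • b 1 + p.2 • b 2)).symm
  calc volume s = ∫⁻ z, volume (Prod.mk z ⁻¹' T) := by
        rw [hsT, (measurePreserving_inner_orthonormalBasis b).measure_preimage
          hT.nullMeasurableSet, Measure.volume_eq_prod, Measure.prod_apply hT]
    _ = ∫⁻ z, ∫⁻ p in Ioi 0 ×ˢ Ioo (-π) π, F z p := by
        refine lintegral_congr fun z => ?_
        rw [← lintegral_indicator_one (hT.preimage (by fun_prop)), ← lintegral_comp_polarCoord_symm]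
        rfl
    _ = ∫⁻ p in Ioi 0 ×ˢ Ioo (-π) π, ∫⁻ z, F z p := lintegral_lintegral_swap hF.aemeasurable
    _ = ∫⁻ θ in Ioo (-π) π, ∫⁻ r in Ioi 0, ∫⁻ z, F z (r, θ) := by
        rw [Measure.volume_eq_prod, ← Measure.prod_restrict, lintegral_prod_symm]
        exact hF.lintegral_prod_left'.aemeasurable
    _ = _ := by simp only [hslice]

section VisibleCone

variable {E : Type*} [NormedAddCommGroup E] [InnerProductSpace ℝ E]

/-- The points of the open unit ball whose direction `p` satisfies `1 ≤ ⟪p, A⟫`: the directions at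
which `A` lies on or beyond the tangent plane of the unit sphere at `p`, that is, from which the
sphere sees `A`. -/
def visibleCone (A : E) : Set E := {x | ‖x‖ < 1 ∧ ‖x‖ ≤ ⟪x, A⟫}

lemma measurableSet_visibleCone [MeasurableSpace E] [BorelSpace E] (A : E) :
    MeasurableSet (visibleCone A) := by
  have hball : IsOpen {x : E | ‖x‖ < 1} := isOpen_lt (by fun_prop) (by fun_prop)
  have hcone : IsClosed {x : E | ‖x‖ ≤ ⟪x, A⟫} := isClosed_le (by fun_prop) (by fun_prop)
  exact hball.measurableSet.inter hcone.measurableSet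

/-- The angle, in `[-π / 2, π / 2]`, from the orthogonal complement of `e` up to `A`. -/
def elevation (A e : E) : ℝ := π / 2 - InnerProductGeometry.angle A e

lemma elevation_mem_Icc (A e : E) : elevation A e ∈ Icc (-(π / 2)) (π / 2) := by
  have h₀ := InnerProductGeometry.angle_nonneg A e
  have h₁ := InnerProductGeometry.angle_le_pi A e
  constructor <;> unfold elevation <;> linarith

lemma elevation_le_elevation {A e e' : E} (he : ‖e‖ = 1) (he' : ‖e'‖ = 1)
    (h : ⟪A, e⟫ ≤ ⟪A, e'⟫) : elevation A e ≤ elevation A e' := by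
  unfold elevation InnerProductGeometry.angle
  rw [he, he']
  gcongr

lemma norm_mul_sin_elevation {A e : E} (he : ‖e‖ = 1) : ‖A‖ * sin (elevation A e) = ⟪A, e⟫ := by
  have := InnerProductGeometry.cos_angle_mul_norm_mul_norm A e
  rw [elevation, sin_pi_div_two_sub, ← this, he]
  ring

lemma norm_mul_cos_elevation {A e : E} (he : ‖e‖ = 1) :
    ‖A‖ * cos (elevation A e) = ‖A - ⟪A, e⟫ • e‖ := by
  have hsin := InnerProductGeometry.sin_angle_mul_norm_mul_norm A e
  have hsq : ‖A - ⟪A, e⟫ • e‖ ^ 2 = ⟪A, A⟫ * ⟪e, e⟫ - ⟪A, e⟫ * ⟪A, e⟫ := by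
    rw [norm_sub_sq_real, norm_smul, he, real_inner_smul_right, real_inner_self_eq_norm_sq,
      real_inner_self_eq_norm_sq, he, norm_eq_abs, mul_one, sq_abs]
    ring
  rw [elevation, cos_pi_div_two_sub, ← sqrt_sq (norm_nonneg (A - _)), hsq, ← hsin, he]
  ring

end VisibleCone

lemma exists_orthonormalBasis_of_norm_eq_one {e : E3} (he : ‖e‖ = 1) (A : E3) :
    ∃ b : OrthonormalBasis (Fin 3) ℝ E3,
      b 1 = e ∧ A - ⟪A, e⟫ • e = ‖A - ⟪A, e⟫ • e‖ • b 0 := by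
  set P := A - ⟪A, e⟫ • e
  have hPe : ⟪P, e⟫ = 0 := by simp [P, inner_sub_left, inner_smul_left, he]
  have hpair : Pairwise fun i j : Fin 3 => ⟪![P, e, 0] i, ![P, e, 0] j⟫ = 0 := by
    have heP : ⟪e, P⟫ = 0 := by rw [real_inner_comm, hPe]
    intro i j hij
    fin_cases i <;> fin_cases j <;> simp_all
  have hb {i : Fin 3} (hi : ![P, e, 0] i ≠ 0) :=
    InnerProductSpace.gramSchmidtOrthonormalBasis_apply_of_orthogonal (𝕜 := ℝ) (by simp) hpair hi
  have he₀ : e ≠ 0 := norm_ne_zero_iff.1 (he ▸ one_ne_zero)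
  refine ⟨_, (hb (i := 1) (by simpa using he₀)).trans ?_, ?_⟩
  · simp [he]
  · rcases eq_or_ne P 0 with hP | hP
    · simp [hP]
    · rw [hb (i := 0) (by simpa using hP)]
      simp [hP]

lemma mem_visibleCone_iff_mem_sector (b : OrthonormalBasis (Fin 3) ℝ E3) {A : E3} {ρ β : ℝ}
    (hA : A = (ρ * cos β) • b 0 + (ρ * sin β) • b 1) (θ : ℝ) {p : ℝ × ℝ} (hp : 0 < p.1) :
    (p.1 * cos θ) • b 0 + (p.1 * sin θ) • b 1 + p.2 • b 2 ∈ visibleCone A ↔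
      p ∈ sector (ρ * cos (θ - β)) := by
  set x := (p.1 * cos θ) • b 0 + (p.1 * sin θ) • b 1 + p.2 • b 2
  have hnorm : √(p.1 ^ 2 + p.2 ^ 2) = ‖x‖ := by
    rw [← sqrt_sq (norm_nonneg x), ← b.sum_sq_inner_right x, Fin.sum_univ_three]
    congr 1
    simp [x, inner_add_right, real_inner_smul_right]
    linear_combination -p.1 ^ 2 * sin_sq_add_cos_sq θ
  have hinner : ⟪x, A⟫ = p.1 * (ρ * cos (θ - β)) := by
    rw [cos_sub, hA]
    simp [x, inner_add_left, inner_add_right, real_inner_smul_left, real_inner_smul_right]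
    ring
  simp only [sector, visibleCone, mem_ofPred_eq, hp, true_and, hinner, ← hnorm]
  rw [sqrt_lt' one_pos, one_pow]

lemma ae_meridianMeasure_pos : ∀ᵐ p ∂meridianMeasure, 0 < p.1 :=
  (ae_withDensity_iff (by fun_prop)).2 <| .of_forall fun _ h =>
    ENNReal.ofReal_pos.1 (pos_iff_ne_zero.2 h)

lemma volume_symmDiff_visibleCone_eq_integral (b : OrthonormalBasis (Fin 3) ℝ E3) {A A' : E3}
    {ρ ρ' β β' : ℝ} (hA : A = (ρ * cos β) • b 0 + (ρ * sin β) • b 1)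
    (hA' : A' = (ρ' * cos β') • b 0 + (ρ' * sin β') • b 1) :
    volume.real (symmDiff (visibleCone A) (visibleCone A')) =
      ∫ θ in (-π)..π, |sectorMass (ρ * cos (θ - β)) - sectorMass (ρ' * cos (θ - β'))| := by
  have hcont : Continuous fun θ =>
      |sectorMass (ρ * cos (θ - β)) - sectorMass (ρ' * cos (θ - β'))| := by
    have := continuous_sectorMass
    fun_prop
  rw [intervalIntegral.integral_of_le (by linarith [pi_pos]), integral_Ioc_eq_integral_Ioo,
    integral_eq_lintegral_of_nonneg_ae (.of_forall fun _ => abs_nonneg _)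
      hcont.aestronglyMeasurable, measureReal_def, volume_eq_lintegral_meridianMeasure b
      ((measurableSet_visibleCone _).symmDiff (measurableSet_visibleCone _))]
  refine congrArg ENNReal.toReal (lintegral_congr fun θ => ?_)
  rw [← meridianMeasure_symmDiff_sector]
  refine measure_congr (Filter.eventuallyEq_set.2 ?_)
  filter_upwards [ae_meridianMeasure_pos] with p hp
  simp only [mem_symmDiff, mem_visibleCone_iff_mem_sector b hA _ hp,
    mem_visibleCone_iff_mem_sector b hA' _ hp]

lemma volume_symmDiff_visibleCone {A B e : E3} (he : ‖e‖ = 1)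
    (hAB : A - ⟪A, e⟫ • e = B - ⟪B, e⟫ • e) (hle : ⟪A, e⟫ ≤ ⟪B, e⟫) :
    volume.real (symmDiff (visibleCone A) (visibleCone B)) =
      flux ‖B‖ (elevation B e) - flux ‖A‖ (elevation A e) := by
  obtain ⟨b, hb, hA⟩ := exists_orthonormalBasis_of_norm_eq_one he A
  have hcos : ‖A‖ * cos (elevation A e) = ‖B‖ * cos (elevation B e) := by
    rw [norm_mul_cos_elevation he, norm_mul_cos_elevation he, hAB]
  have hsin : ‖A‖ * sin (elevation A e) ≤ ‖B‖ * sin (elevation B e) := by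
    rwa [norm_mul_sin_elevation he, norm_mul_sin_elevation he]
  have hpolarA : A = (‖A‖ * cos (elevation A e)) • b 0 + (‖A‖ * sin (elevation A e)) • b 1 := by
    rw [norm_mul_cos_elevation he, norm_mul_sin_elevation he, hb, ← hA, sub_add_cancel]
  have hpolarB : B = (‖B‖ * cos (elevation B e)) • b 0 + (‖B‖ * sin (elevation B e)) • b 1 := by
    rw [← hcos, norm_mul_cos_elevation he, norm_mul_sin_elevation he, hb, ← hA, hAB, sub_add_cancel]
  rw [volume_symmDiff_visibleCone_eq_integral b hpolarA hpolarB,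
    integral_abs_sectorMass_sub (norm_nonneg A) (norm_nonneg B)
      (abs_le.2 (elevation_mem_Icc A e)) (abs_le.2 (elevation_mem_Icc B e)) hcos hsin]

lemma volume_symmDiff_visibleCone_eq_sub_potential {A B : E3} (hAB : A ≠ B) :
    volume.real (symmDiff (visibleCone A) (visibleCone B)) = 2 / 3 * ‖B - A‖ -
      (potential ‖B‖ (elevation B (normalize (B - A))) -
        potential ‖A‖ (elevation A (normalize (B - A)))) := by
  set e := normalize (B - A)
  have he : ‖e‖ = 1 := norm_normalize (sub_ne_zero.2 hAB.symm)
  have hBA : ‖B - A‖ • e = B - A := norm_smul_normalize _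
  have hinner : ⟪B, e⟫ = ⟪A, e⟫ + ‖B - A‖ := by
    rw [← sub_eq_iff_eq_add', ← inner_sub_left, ← hBA, real_inner_smul_left,
      real_inner_self_eq_norm_sq, he, hBA]
    ring
  rw [volume_symmDiff_visibleCone he ?_ (by linarith [norm_nonneg (B - A)]), potential, potential,
    norm_mul_sin_elevation he, norm_mul_sin_elevation he, hinner]
  · ring
  · rw [hinner, add_smul, hBA]
    abel

/-! ### Closed polygons covering the sphere -/

open Fin.NatCast in
lemma exists_mem_add_one_notMem {n : ℕ} [NeZero n] {s : Set (Fin n)} (hs : s.Nonempty)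
    (hs' : sᶜ.Nonempty) : ∃ i ∈ s, i + 1 ∉ s := by
  by_contra! h
  obtain ⟨i, hi⟩ := hs
  obtain ⟨j, hj⟩ := hs'
  have hreach (m : ℕ) : i + (m : Fin n) ∈ s := by
    induction m with
    | zero => simpa
    | succ m ih => simpa [add_assoc] using h _ ih
  exact hj (by simpa using hreach (j - i).val)

lemma two_mul_measureReal_le_sum_symmDiff {α : Type*} [MeasurableSpace α] {μ : Measure α} {n : ℕ}
    [NeZero n] {K : Fin n → Set α} (hK : ∀ i, MeasurableSet (K i)) (hfin : ∀ i, μ (K i) ≠ ∞)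
    {s : Set α} (hunion : ∀ x ∈ s, ∃ i, x ∈ K i) (hinter : ∀ x ∈ s, ∃ i, x ∉ K i) :
    2 * μ.real s ≤ ∑ i, μ.real (symmDiff (K i) (K (i + 1))) := by
  have hsum {D : Fin n → Set α} (hD : ∀ i, μ (D i) ≠ ∞) (hsD : ∀ x ∈ s, ∃ i, x ∈ D i) :
      μ.real s ≤ ∑ i, μ.real (D i) :=
    (measureReal_mono (fun x hx => mem_iUnion.2 (hsD x hx)) (ne_top_of_le_ne_top
      (ENNReal.sum_ne_top.2 fun i _ => hD i) (measure_iUnion_fintype_le μ D))).trans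
      (measureReal_iUnion_fintype_le D)
  have hleave : μ.real s ≤ ∑ i, μ.real (K i \ K (i + 1)) :=
    hsum (fun i => measure_ne_top_of_subset sdiff_subset (hfin i)) fun x hx =>
      exists_mem_add_one_notMem (s := {i | x ∈ K i}) (hunion x hx) (hinter x hx)
  have henter : μ.real s ≤ ∑ i, μ.real (K (i + 1) \ K i) := by
    refine hsum (fun i => measure_ne_top_of_subset sdiff_subset (hfin (i + 1))) fun x hx => ?_
    obtain ⟨i, hi, hi'⟩ := exists_mem_add_one_notMem (s := {i | x ∉ K i}) (hinter x hx)
      (by simpa [Set.Nonempty] using hunion x hx)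
    exact ⟨i, not_not.1 hi', hi⟩
  simp only [measureReal_symmDiff_eq (hK _) (hK _) (hfin _) (hfin _), Finset.sum_add_distrib]
  linarith

section Polygon

variable {E : Type*} [NormedAddCommGroup E] {n : ℕ}

/-- The length of the closed polygon `w 0, w 1, …, w (n - 1), w 0`. The index `i + 1` is taken
modulo `n`. -/
def perimeter [NeZero n] (w : Fin n → E) : ℝ := ∑ i, ‖w (i + 1) - w i‖

lemma perimeter_nonneg [NeZero n] (w : Fin n → E) : 0 ≤ perimeter w :=
  Finset.sum_nonneg fun _ _ => norm_nonneg _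

lemma continuous_perimeter [NeZero n] : Continuous (perimeter : (Fin n → E) → ℝ) := by
  unfold perimeter
  fun_prop

lemma perimeter_comp_add_left [NeZero n] (w : Fin n → E) (k : Fin n) :
    perimeter (fun i => w (k + i)) = perimeter w := by
  simpa only [perimeter, Equiv.coe_addLeft, add_assoc] using
    Equiv.sum_comp (Equiv.addLeft k) fun i => ‖w (i + 1) - w i‖

lemma perimeter_comp_castSucc {w : Fin (n + 2) → E} (hw : w (Fin.last (n + 1)) = w 0) :
    perimeter (fun i => w (Fin.castSucc i)) = perimeter w := by
  have hnext (i : Fin (n + 1)) : w (Fin.castSucc (i + 1)) = w (Fin.succ i) := by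
    induction i using Fin.lastCases with
    | last => rw [Fin.last_add_one, Fin.castSucc_zero, Fin.succ_last, hw]
    | cast i => rw [Fin.coeSucc_eq_succ, Fin.succ_castSucc]
  rw [perimeter, perimeter, Fin.sum_univ_castSucc (n := n + 1)]
  simp only [hnext, Fin.coeSucc_eq_succ, Fin.last_add_one, hw, sub_self, norm_zero, add_zero]

open Fin.NatCast in
lemma norm_sub_le_perimeter [NeZero n] (w : Fin n → E) (i j : Fin n) :
    ‖w j - w i‖ ≤ perimeter w := by
  set m := (j - i).val
  have hj : i + (m : Fin n) = j := by simp [m]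
  calc ‖w j - w i‖ = dist (w (i + (0 : ℕ))) (w (i + m)) := by simp [hj, dist_eq_norm']
    _ ≤ ∑ l ∈ Finset.range m, dist (w (i + l)) (w (i + (l + 1 : ℕ))) :=
        dist_le_range_sum_dist (fun l => w (i + l)) m
    _ ≤ ∑ l ∈ Finset.range n, dist (w (i + l)) (w (i + (l + 1 : ℕ))) :=
        Finset.sum_le_sum_of_subset_of_nonneg
          (Finset.range_subset_range.2 (j - i).isLt.le) fun _ _ _ => dist_nonneg
    _ = perimeter fun l => w (i + l) := by
        simp [perimeter, Finset.sum_range, dist_eq_norm']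
    _ = perimeter w := perimeter_comp_add_left w i

variable [InnerProductSpace ℝ E]

/-- The unit vector pointing from `w i` to `w (i + 1)`, or `0` if the two vertices coincide. -/
def edgeDirection [NeZero n] (w : Fin n → E) (i : Fin n) : E := normalize (w (i + 1) - w i)

/-- Every tangent plane of the unit sphere has a vertex of `w` on it or on its far side. In finite
dimensions this says that the convex hull of `w` contains the unit sphere. -/
def CoversSphere {ι : Type*} (w : ι → E) : Prop := ∀ p : E, ‖p‖ = 1 → ∃ i, 1 ≤ ⟪p, w i⟫

lemma norm_edgeDirection [NeZero n] {w : Fin n → E} {i : Fin n} (hi : w i ≠ w (i + 1)) :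
    ‖edgeDirection w i‖ = 1 :=
  norm_normalize (sub_ne_zero.2 hi.symm)

lemma isClosed_coversSphere : IsClosed {w : Fin n → E | CoversSphere w} := by
  simp only [CoversSphere, ofPred_forall, ofPred_exists]
  refine isClosed_iInter fun p => isClosed_iInter fun _ => isClosed_iUnion_of_finite fun i => ?_
  exact isClosed_le continuous_const (by fun_prop)

namespace CoversSphere

lemma of_range_subset {ι κ : Type*} {w : ι → E} (hw : CoversSphere w) {v : κ → E}
    (hv : range w ⊆ range v) : CoversSphere v := fun p hp => by
  obtain ⟨i, hi⟩ := hw p hp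
  obtain ⟨j, hj⟩ := hv (mem_range_self i)
  exact ⟨j, hj ▸ hi⟩

lemma norm_le_perimeter [NeZero n] {w : Fin n → E} (hw : CoversSphere w) (i : Fin n) :
    ‖w i‖ ≤ perimeter w := by
  rcases eq_or_ne (w i) 0 with hi | hi
  · simpa [hi] using perimeter_nonneg w
  obtain ⟨j, hj⟩ := hw (-normalize (w i)) (by rw [norm_neg, norm_normalize hi])
  have hinner : ⟪normalize (w i), w i⟫ = ‖w i‖ := by
    simp [NormedSpace.normalize, real_inner_smul_left, pow_two, hi]
  have hcs := real_inner_le_norm (normalize (w i)) (w i - w j)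
  rw [inner_sub_right, hinner, norm_normalize hi, one_mul] at hcs
  rw [inner_neg_left] at hj
  linarith [norm_sub_le_perimeter w j i]

lemma exists_isMinOn_perimeter [NeZero n] [ProperSpace E] {w₀ : Fin n → E}
    (hw₀ : CoversSphere w₀) :
    ∃ w : Fin n → E, CoversSphere w ∧ IsMinOn perimeter {w | CoversSphere w} w := by
  refine continuous_perimeter.continuousOn.exists_isMinOn' isClosed_coversSphere hw₀ ?_
  filter_upwards [(tendsto_norm_cocompact_atTop.eventually_ge_atTop (perimeter w₀)).filter_mono
    inf_le_left, Filter.mem_inf_of_right (Filter.mem_principal_self _)] with w hnorm hw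
  exact hnorm.trans ((pi_norm_le_iff_of_nonneg (perimeter_nonneg w)).2
    (norm_le_perimeter hw))

lemma exists_perimeter_eq_of_edge_eq {w : Fin (n + 2) → E} (hw : CoversSphere w) {k : Fin (n + 2)}
    (hk : w k = w (k + 1)) :
    ∃ w' : Fin (n + 1) → E, CoversSphere w' ∧ perimeter w' = perimeter w := by
  set v : Fin (n + 2) → E := fun i => w (k + 1 + i) with hv
  have hclosed : v (Fin.last (n + 1)) = v 0 := by
    simp only [hv]
    rw [add_assoc, add_comm 1, Fin.last_add_one, add_zero, add_zero, hk]
  refine ⟨fun i => v (Fin.castSucc i), hw.of_range_subset ?_, ?_⟩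
  · rintro _ ⟨i, rfl⟩
    have hi : w i = v (i - (k + 1)) := by simp [hv]
    rw [hi]
    induction i - (k + 1) using Fin.lastCases with
    | last => exact ⟨0, hclosed.symm⟩
    | cast j => exact ⟨j, rfl⟩
  · rw [perimeter_comp_castSucc hclosed, perimeter_comp_add_left]

end CoversSphere

lemma hasDerivAt_norm_add_smul {a : E} (ha : a ≠ 0) (v : E) :
    HasDerivAt (fun ε : ℝ => ‖a + ε • v‖) ⟪normalize a, v⟫ 0 := by
  have hline : HasDerivAt (fun ε : ℝ => a + ε • v) v 0 := by
    simpa using ((hasDerivAt_id (0 : ℝ)).smul_const v).const_add a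
  have := hline.norm_sq.sqrt (by simpa using ha)
  simp only [sqrt_sq (norm_nonneg _)] at this
  convert! this using 1
  simp only [NormedSpace.normalize, real_inner_smul_left, zero_smul, add_zero]
  field_simp

lemma hasDerivAt_perimeter_add_smul [NeZero n] {w : Fin n → E} (hw : ∀ i, w i ≠ w (i + 1))
    (u : Fin n → E) : HasDerivAt (fun ε : ℝ => perimeter (w + ε • u))
      (∑ i, ⟪edgeDirection w i, u (i + 1) - u i⟫) 0 := by
  have h := HasDerivAt.fun_sum (u := Finset.univ) fun i _ =>
    hasDerivAt_norm_add_smul (sub_ne_zero.2 (hw i).symm) (u (i + 1) - u i)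
  convert! h using 3
  unfold perimeter
  congr! 2 with i
  simp only [Pi.add_apply, Pi.smul_apply, smul_sub]
  abel

lemma hasDerivAt_perimeter_add_smul_single [NeZero n] {w : Fin n → E}
    (hw : ∀ i, w i ≠ w (i + 1)) (k : Fin n) (v : E) :
    HasDerivAt (fun ε : ℝ => perimeter (w + ε • (Pi.single (k + 1) v : Fin n → E)))
      (⟪edgeDirection w k, v⟫ - ⟪edgeDirection w (k + 1), v⟫) 0 := by
  convert! hasDerivAt_perimeter_add_smul hw (Pi.single (k + 1) v) using 1
  simp only [inner_sub_right, Finset.sum_sub_distrib]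
  rw [Fintype.sum_eq_single k, Fintype.sum_eq_single (k + 1)]
  · simp
  all_goals
    intro i hi
    simp [hi]

lemma CoversSphere.add_smul_single {w : Fin n → E} (hw : CoversSphere w) (k : Fin n) {ε : ℝ}
    (hε : 0 ≤ ε) : CoversSphere (w + ε • (Pi.single k (w k) : Fin n → E)) := fun p hp => by
  obtain ⟨i, hi⟩ := hw p hp
  refine ⟨i, ?_⟩
  rcases eq_or_ne i k with rfl | hik
  · simp only [Pi.add_apply, Pi.smul_apply, Pi.single_eq_same, inner_add_right,
      real_inner_smul_right]
    nlinarith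
  · simpa [hik] using hi

lemma inner_edgeDirection_le_of_isMinOn [NeZero n] {w : Fin n → E} (hw : CoversSphere w)
    (hedge : ∀ i, w i ≠ w (i + 1)) (hmin : IsMinOn perimeter {w | CoversSphere w} w) (k : Fin n) :
    ⟪w (k + 1), edgeDirection w (k + 1)⟫ ≤ ⟪w (k + 1), edgeDirection w k⟫ := by
  have hderiv := hasDerivAt_perimeter_add_smul_single hedge k (w (k + 1))
  rw [real_inner_comm, real_inner_comm _ (w (k + 1)), ← sub_nonneg]
  refine ge_of_tendsto hderiv.tendsto_slope_zero_right ?_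
  filter_upwards [self_mem_nhdsWithin] with ε hε
  have hε : 0 < ε := hε
  have := hmin (hw.add_smul_single (k + 1) hε.le)
  simp only [mem_ofPred_eq] at this
  simp only [zero_add, zero_smul, add_zero, smul_eq_mul]
  exact mul_nonneg (by positivity) (sub_nonneg.2 this)

end Polygon

lemma CoversSphere.le_sum_volume_symmDiff_visibleCone {n : ℕ} [NeZero n] {w : Fin n → E3}
    (hw : CoversSphere w) :
    8 * π / 3 ≤ ∑ i, volume.real (symmDiff (visibleCone (w i)) (visibleCone (w (i + 1)))) := by
  have hcone (A : E3) : visibleCone A ⊆ Metric.ball 0 1 := fun x hx => by simpa using hx.1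
  have hunion (x : E3) (hx : x ∈ Metric.ball (0 : E3) 1 \ {0}) : ∃ i, x ∈ visibleCone (w i) := by
    obtain ⟨i, hi⟩ := hw (normalize x) (norm_normalize hx.2)
    refine ⟨i, by simpa using hx.1, ?_⟩
    rw [← norm_smul_normalize x, real_inner_smul_left, norm_smul_normalize]
    exact le_mul_of_one_le_right (norm_nonneg x) hi
  have hinter (x : E3) (hx : x ∈ Metric.ball (0 : E3) 1 \ {0}) : ∃ i, x ∉ visibleCone (w i) := by
    obtain ⟨i, hi⟩ := hunion (-x) (by simpa using hx)
    refine ⟨i, fun hi' => ?_⟩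
    have := hi.2
    rw [norm_neg, inner_neg_left] at this
    linarith [hi'.2, norm_pos_iff.2 hx.2]
  have hball : volume.real (Metric.ball (0 : E3) 1 \ {0}) = 4 * π / 3 := by
    have hzero : volume.real {(0 : E3)} = 0 := by simp [measureReal_def]
    rw [measureReal_sdiff_null hzero (by simp), measureReal_def,
      EuclideanSpace.volume_ball_fin_three, ENNReal.ofReal_one, one_pow, one_mul,
      ENNReal.toReal_ofReal (by positivity)]
    ring
  have := two_mul_measureReal_le_sum_symmDiff (μ := volume)
    (fun i => measurableSet_visibleCone (w i))
    (fun i => measure_ne_top_of_subset (hcone (w i)) Metric.isBounded_ball.measure_lt_top.ne)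
    hunion hinter
  linarith

lemma four_pi_le_perimeter_of_inner_edgeDirection_le {n : ℕ} [NeZero n] {w : Fin n → E3}
    (hw : CoversSphere w) (hedge : ∀ i, w i ≠ w (i + 1))
    (hcrit : ∀ i, ⟪w (i + 1), edgeDirection w (i + 1)⟫ ≤ ⟪w (i + 1), edgeDirection w i⟫) :
    4 * π ≤ perimeter w := by
  set start : Fin n → ℝ := fun i => potential ‖w i‖ (elevation (w i) (edgeDirection w i))
  set finish : Fin n → ℝ := fun i =>
    potential ‖w (i + 1)‖ (elevation (w (i + 1)) (edgeDirection w i))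
  have hvertex (i : Fin n) : start (i + 1) ≤ finish i :=
    potential_monotoneOn (norm_nonneg _) (elevation_mem_Icc _ _) (elevation_mem_Icc _ _) <|
      elevation_le_elevation (norm_edgeDirection (hedge _)) (norm_edgeDirection (hedge _)) (hcrit i)
  have hcyclic : ∑ i, start i ≤ ∑ i, finish i :=
    (Equiv.sum_comp (Equiv.addRight 1) start).symm.trans_le (Finset.sum_le_sum fun i _ => hvertex i)
  have hvolume := calc
    8 * π / 3 ≤ ∑ i, volume.real (symmDiff (visibleCone (w i)) (visibleCone (w (i + 1)))) :=
        hw.le_sum_volume_symmDiff_visibleCone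
    _ = ∑ i, (2 / 3 * ‖w (i + 1) - w i‖ - (finish i - start i)) :=
        Finset.sum_congr rfl fun i _ => volume_symmDiff_visibleCone_eq_sub_potential (hedge i)
    _ = 2 / 3 * perimeter w - (∑ i, finish i - ∑ i, start i) := by
        rw [Finset.sum_sub_distrib, Finset.sum_sub_distrib, ← Finset.mul_sum, perimeter]
  linarith

lemma not_coversSphere_of_subsingleton {ι E : Type*} [Subsingleton ι] [NormedAddCommGroup E]
    [InnerProductSpace ℝ E] [Nontrivial E] (w : ι → E) : ¬CoversSphere w := fun hw => by
  obtain ⟨p, hp⟩ := exists_norm_eq E zero_le_one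
  obtain ⟨i, hi⟩ := hw p hp
  obtain ⟨j, hj⟩ := hw (-p) (by rwa [norm_neg])
  rw [Subsingleton.elim j i, inner_neg_left] at hj
  linarith

theorem four_pi_le_perimeter {n : ℕ} {w : Fin (n + 1) → E3} (hw : CoversSphere w) :
    4 * π ≤ perimeter w := by
  induction n with
  | zero => exact absurd hw (not_coversSphere_of_subsingleton (ι := Fin 1) w)
  | succ n ih =>
    obtain ⟨v, hv, hmin⟩ := hw.exists_isMinOn_perimeter
    refine le_trans ?_ (hmin hw)
    by_cases hedge : ∀ i, v i ≠ v (i + 1)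
    · exact four_pi_le_perimeter_of_inner_edgeDirection_le hv hedge
        (inner_edgeDirection_le_of_isMinOn hv hedge hmin)
    · push Not at hedge
      obtain ⟨k, hk⟩ := hedge
      obtain ⟨v', hv', hperim⟩ := hv.exists_perimeter_eq_of_edge_eq hk
      exact (ih hv').trans_eq hperim

/-! ### From curves to polygons -/

section Curve

variable {E : Type*} [NormedAddCommGroup E]

lemma perimeter_smul_sub {n : ℕ} [NeZero n] [NormedSpace ℝ E] {c : ℝ} (hc : 0 ≤ c) (w : Fin n → E)
    (x : E) : perimeter (fun i => c • (w i - x)) = c * perimeter w := by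
  simp only [perimeter, ← smul_sub, sub_sub_sub_cancel_right, norm_smul, norm_of_nonneg hc,
    Finset.mul_sum]

lemma ofReal_perimeter_comp_le_eVariationOn {α : Type*} [LinearOrder α] {γ : α → E} {s : Set α}
    {n : ℕ} {t : Fin (n + 1) → α} (ht : Monotone t) (hts : ∀ i, t i ∈ s) {b : α} (hb : b ∈ s)
    (htb : ∀ i, t i ≤ b) (hclosed : γ (t 0) = γ b) :
    ENNReal.ofReal (perimeter (γ ∘ t)) ≤ eVariationOn γ s := by
  let u : ℕ → α := fun i => if h : i < n + 1 then t ⟨i, h⟩ else b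
  have hut {i : ℕ} (h : i < n + 1) : u i = t ⟨i, h⟩ := dif_pos h
  have hub {i : ℕ} (h : ¬i < n + 1) : u i = b := dif_neg h
  have hmono : Monotone u := by
    intro i j hij
    by_cases hj : j < n + 1
    · rw [hut hj, hut (hij.trans_lt hj)]
      exact ht hij
    · rw [hub hj]
      by_cases hi : i < n + 1
      · exact (hut hi).trans_le (htb _)
      · exact (hub hi).le
  have hus (i : ℕ) : u i ∈ s := by
    by_cases hi : i < n + 1
    · exact hut hi ▸ hts _
    · exact hub hi ▸ hb
  have hnext (i : Fin (n + 1)) : γ (u (i + 1)) = γ (t (i + 1)) := by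
    induction i using Fin.lastCases with
    | last => rw [Fin.last_add_one, hclosed, hub (by simp)]
    | cast i => rw [Fin.coeSucc_eq_succ, hut (by simp)]; rfl
  calc ENNReal.ofReal (perimeter (γ ∘ t))
      = ∑ i ∈ Finset.range (n + 1), edist (γ (u (i + 1))) (γ (u i)) := by
        rw [perimeter, ENNReal.ofReal_sum_of_nonneg fun _ _ => norm_nonneg _, Finset.sum_range]
        simp only [hnext, hut (Fin.isLt _), Function.comp_apply, edist_dist, dist_eq_norm]
    _ ≤ eVariationOn γ s := eVariationOn.sum_le hmono hus

variable [InnerProductSpace ℝ E]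

lemma exists_le_inner_of_sphere_subset_convexHull {s : Set E} {x : E} {r : ℝ} (hr : 0 ≤ r)
    (hs : Metric.sphere x r ⊆ convexHull ℝ s) {p : E} (hp : ‖p‖ = 1) :
    ∃ y ∈ s, r ≤ ⟪p, y - x⟫ := by
  have hmem : x + r • p ∈ convexHull ℝ s := hs (by simp [norm_smul, hp, abs_of_nonneg hr])
  obtain ⟨y, hy, hle⟩ := (LinearMap.convexOn (innerₛₗ ℝ p) convex_univ).exists_ge_of_mem_convexHull
    (subset_univ s) hmem
  refine ⟨y, hy, ?_⟩
  simp only [innerₛₗ_apply_apply, inner_add_right, real_inner_smul_right,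
    real_inner_self_eq_norm_sq, hp] at hle
  rw [inner_sub_right]
  linarith

lemma exists_finset_coversSphere [ProperSpace E] {ι : Type*} {w : ι → E}
    (hw : ∀ p, ‖p‖ = 1 → ∃ i, 1 < ⟪p, w i⟫) :
    ∃ s : Finset ι, CoversSphere fun i : s => w i := by
  obtain ⟨s, hs⟩ := (isCompact_sphere (0 : E) 1).elim_finite_subcover
    (fun i => {p | 1 < ⟪p, w i⟫}) (fun i => isOpen_lt continuous_const (by fun_prop))
    fun p hp => mem_iUnion.2 (hw p (by simpa using hp))
  refine ⟨s, fun p hp => ?_⟩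
  obtain ⟨i, hi, h⟩ := mem_iUnion₂.1 (hs (by simpa using hp))
  exact ⟨⟨i, hi⟩, h.le⟩

end Curve

lemma ofReal_four_pi_le_eVariationOn {a b : ℝ} (hab : a ≤ b) {γ : ℝ → E3} (hclosed : γ a = γ b)
    {x : E3} {ρ : ℝ} (hρ : 0 < ρ) (hγ : ∀ p : E3, ‖p‖ = 1 → ∃ t ∈ Icc a b, ρ < ⟪p, γ t - x⟫) :
    ENNReal.ofReal (4 * π * ρ) ≤ eVariationOn γ (Icc a b) := by
  obtain ⟨F, hF⟩ := exists_finset_coversSphere (w := fun t : Icc a b => ρ⁻¹ • (γ t - x))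
    fun p hp => by
      obtain ⟨t, ht, h⟩ := hγ p hp
      exact ⟨⟨t, ht⟩, by rwa [real_inner_smul_right, ← div_eq_inv_mul, one_lt_div hρ]⟩
  have : Fact (a ≤ b) := ⟨hab⟩
  obtain ⟨n, hn⟩ := Nat.exists_eq_succ_of_ne_zero (Finset.insert_nonempty ⊥ F).card_ne_zero
  set t : Fin (n + 1) ↪o Icc a b := (insert ⊥ F).orderEmbOfFin hn
  have hrange : range t = insert ⊥ ↑F := by simp [t]
  have hstart : t 0 = ⊥ := by
    obtain ⟨i, hi⟩ : ⊥ ∈ range t := hrange ▸ mem_insert _ _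
    exact le_bot_iff.1 (hi ▸ t.monotone (Fin.zero_le i))
  have hcover : CoversSphere fun i => ρ⁻¹ • (γ (t i) - x) := by
    refine hF.of_range_subset ?_
    rintro _ ⟨⟨i, hi⟩, rfl⟩
    obtain ⟨j, rfl⟩ : i ∈ range t := hrange ▸ mem_insert_of_mem _ hi
    exact ⟨j, rfl⟩
  have hperim := four_pi_le_perimeter hcover
  rw [perimeter_smul_sub (inv_nonneg.2 hρ.le), ← div_eq_inv_mul, le_div_iff₀ hρ] at hperim
  calc ENNReal.ofReal (4 * π * ρ) ≤ ENNReal.ofReal (perimeter (γ ∘ fun i => (t i : ℝ))) :=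
        ENNReal.ofReal_le_ofReal hperim
    _ ≤ eVariationOn γ (Icc a b) :=
        ofReal_perimeter_comp_le_eVariationOn (fun _ _ h => t.monotone h) (fun i => (t i).2)
          (right_mem_Icc.2 hab) (fun i => (t i).2.2) (by rw [hstart]; exact hclosed)

theorem length_ge_four_pi_r_of_inspects_sphere_general {a b : ℝ} {γ : ℝ → E3}
    (hclosed : γ a = γ b) {x : E3} {r : ℝ} (hr : 0 < r)
    (hhull : Metric.sphere x r ⊆ convexHull ℝ (γ '' Icc a b)) :
    ENNReal.ofReal (4 * π * r) ≤ eVariationOn γ (Icc a b) := by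
  have hsupport (p : E3) (hp : ‖p‖ = 1) : ∃ t ∈ Icc a b, r ≤ ⟪p, γ t - x⟫ := by
    simpa using exists_le_inner_of_sphere_subset_convexHull hr.le hhull hp
  have hab : a ≤ b := by
    obtain ⟨p, hp⟩ := exists_norm_eq E3 zero_le_one
    obtain ⟨t, ht, -⟩ := hsupport p hp
    exact ht.1.trans ht.2
  have hlim : Filter.Tendsto (fun ρ => ENNReal.ofReal (4 * π * ρ)) (𝓝[<] r)
      (𝓝 (ENNReal.ofReal (4 * π * r))) :=
    ((ENNReal.continuous_ofReal.comp (by fun_prop)).tendsto r).mono_left nhdsWithin_le_nhds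
  refine le_of_tendsto hlim ?_
  filter_upwards [Ioo_mem_nhdsLT hr] with ρ hρ
  refine ofReal_four_pi_le_eVariationOn (x := x) hab hclosed hρ.1 fun p hp => ?_
  obtain ⟨t, ht, hle⟩ := hsupport p hp
  exact ⟨t, ht, hρ.2.trans_le hle⟩

/-- **Zalgaller's sphere inspection inequality.** If a closed rectifiable curve
`γ : [a,b] → ℝ³` lies outside the sphere of radius `r` centered at `x` and contains
that sphere in its convex hull, then its length is at least `4πr`. -/
theorem length_ge_four_pi_r_of_inspects_sphere
    (a b : ℝ) (hab : a < b) (γ : ℝ → E3)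
    (hcont : ContinuousOn γ (Set.Icc a b))
    (hclosed : γ a = γ b)
    (hrect : eVariationOn γ (Set.Icc a b) ≠ ⊤)
    (x : E3) (r : ℝ) (hr : 0 < r)
    (hhull : Metric.sphere x r ⊆ convexHull ℝ (γ '' Set.Icc a b))
    (hout : ∀ t ∈ Set.Icc a b, r ≤ dist (γ t) x) :
    4 * π * r ≤ (eVariationOn γ (Set.Icc a b)).toReal :=
  (ENNReal.ofReal_le_iff_le_toReal hrect).1
    (length_ge_four_pi_r_of_inspects_sphere_general hclosed hr hhull)
end
end

section
/- There exists a closed rectifiable curve γ : [0,1] → ℝ³ with S² contained in the convex hull of γ([0,1]) whose length is minimal, i.e. L(γ) ≤ L(β) for every closed rectifiable curve β : [0,1] → ℝ³ with S² contained in the convex hull of β([0,1]). -/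
open MeasureTheory Set Real
open scoped ENNReal NNReal RealInnerProductSpace

noncomputable section

/-- A closed rectifiable curve on `[a,b]` whose convex hull contains the unit sphere. -/
def IsInspection (a b : ℝ) (γ : ℝ → E3) : Prop :=
  ContinuousOn γ (Set.Icc a b) ∧ γ a = γ b ∧ eVariationOn γ (Set.Icc a b) ≠ ⊤ ∧
    Metric.sphere (0 : E3) 1 ⊆ convexHull ℝ (γ '' Set.Icc a b)

/-!
The proof is the direct method, run without extracting sequences. Every rectifiable curve `β` of
length at most `C * (b - a)` can be reparametrized over `[a, b]`, with the same image and length, to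
be `C`-Lipschitz. So once some competitor is known, it suffices to minimize over loops with one
fixed Lipschitz constant `C`: these have length at most `C * (b - a)`, which any remaining curve
exceeds.

Length is lower semicontinuous for pointwise convergence, and the `C`-Lipschitz loops whose hull
contains a given nonempty set form a compact set for it. By Carathéodory a point is in the hull of
`f '' [a, b]` iff it is a convex combination of `d + 1` points of the curve, where `d` is the
dimension; the weights and parameters range over a compact space, so this condition is closed in
`f`. Containing one fixed point in its hull keeps an equi-Lipschitz curve in a fixed ball.
-/

open Metric Module
open scoped ContDiff

section ConvexHull

variable {R E : Type*} [Field R] [LinearOrder R] [IsStrictOrderedRing R] [AddCommGroup E]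
  [Module R E]

theorem convexHull_range_eq_image_stdSimplex {ι : Type*} [Fintype ι] (z : ι → E) :
    convexHull R (range z) = (fun w : ι → R => ∑ i, w i • z i) '' stdSimplex R ι := by
  classical
  have hz : Fintype.linearCombination R z '' range (fun i j => if i = j then (1 : R) else 0) =
      range z := by
    rw [← range_comp]
    congr 1
    ext i
    simp [Fintype.linearCombination_apply]
  rw [← hz, ← LinearMap.image_convexHull, convexHull_basis_eq_stdSimplex]
  rfl

theorem mem_convexHull_iff_exists_fin_finrank_succ [FiniteDimensional R E] {s : Set E} {x : E} :
    x ∈ convexHull R s ↔ ∃ w ∈ stdSimplex R (Fin (finrank R E + 1)),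
      ∃ z : Fin (finrank R E + 1) → s, ∑ i, w i • (z i : E) = x := by
  constructor
  · intro hx
    rw [convexHull_eq_union] at hx
    simp only [mem_iUnion] at hx
    obtain ⟨t, hts, ht, hxt⟩ := hx
    have : Nonempty t := (convexHull_nonempty_iff.1 ⟨x, hxt⟩).to_subtype
    have hcard : Fintype.card t ≤ Fintype.card (Fin (finrank R E + 1)) := by
      simpa using ht.card_le_finrank_succ.trans (by gcongr; exact Submodule.finrank_le _)
    obtain ⟨σ, hσ⟩ : ∃ σ : Fin (finrank R E + 1) → t, σ.Surjective :=
      Function.exists_surjective_iff.2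
        ⟨inferInstance, Function.Embedding.nonempty_of_card_le hcard⟩
    have hrange : range ((↑) ∘ σ : Fin (finrank R E + 1) → E) = t := by
      rw [hσ.range_comp]; exact Subtype.range_coe
    rw [← hrange, convexHull_range_eq_image_stdSimplex] at hxt
    obtain ⟨w, hw, rfl⟩ := hxt
    exact ⟨w, hw, fun i => ⟨σ i, hts (σ i).2⟩, rfl⟩
  · rintro ⟨w, hw, z, rfl⟩
    exact (convex_convexHull R s).sum_mem (fun i _ => hw.1 i) hw.2
      fun i _ => subset_convexHull R s (z i).2

end ConvexHull

section LipschitzConvexHull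

variable {X E : Type*} [NormedAddCommGroup E] [NormedSpace ℝ E]

theorem convexHull_image_subset_closedBall_of_lipschitzWith [PseudoMetricSpace X] {f : X → E}
    {C : ℝ≥0} (hf : LipschitzWith C f) {s : Set X} {t : X} {r : ℝ} (hs : s ⊆ closedBall t r) :
    convexHull ℝ (f '' s) ⊆ closedBall (f t) (C * r) :=
  convexHull_min ((hf.mapsTo_closedBall t r).mono_left hs).image_subset (convex_closedBall _ _)

theorem isClosed_setOfPred_lipschitzWith_mem_convexHull_image [PseudoEMetricSpace X]
    [FiniteDimensional ℝ E] (C : ℝ≥0) {K : Set X} (hK : IsCompact K) (x : E) :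
    IsClosed {f : X → E | LipschitzWith C f ∧ x ∈ convexHull ℝ (f '' K)} := by
  let F := {f : X → E // LipschitzWith C f}
  let ι := Fin (finrank ℝ E + 1)
  have : CompactSpace K := isCompact_iff_compactSpace.1 hK
  have hF : IsClosed {f : X → E | LipschitzWith C f} := isClosed_setOfPred_lipschitzWith C
  have heval : Continuous fun p : F × X => p.1.1 p.2 :=
    continuous_prod_of_continuous_lipschitzWith' _ C (fun f => f.2) fun t =>
      (continuous_apply t).comp continuous_subtype_val
  let T : Set (F × stdSimplex ℝ ι × (ι → K)) := {p | ∑ i, p.2.1.1 i • p.1.1 (p.2.2 i) = x}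
  have hT : IsClosed T := by
    refine isClosed_eq (continuous_finsetSum _ fun i _ => .smul ?_ ?_) continuous_const
    · exact (continuous_apply i).comp
        (continuous_subtype_val.comp (continuous_fst.comp continuous_snd))
    · exact heval.comp (f := fun p : F × stdSimplex ℝ ι × (ι → K) => (p.1, (p.2.2 i : X)))
        (by fun_prop)
  convert hF.isClosedEmbedding_subtypeVal.isClosedMap _ (isClosedMap_fst_of_compactSpace T hT)
  ext f
  simp only [mem_ofPred_eq, mem_convexHull_iff_exists_fin_finrank_succ]
  constructor
  · rintro ⟨hf, w, hw, z, hx⟩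
    choose t ht htz using fun i => (z i).2
    have hmem : (⟨f, hf⟩, ⟨w, hw⟩, fun i => ⟨t i, ht i⟩) ∈ T := by simpa [T, htz] using hx
    exact ⟨⟨f, hf⟩, ⟨_, hmem, rfl⟩, rfl⟩
  · rintro ⟨_, ⟨⟨g, w, t⟩, hx, rfl⟩, rfl⟩
    exact ⟨g.2, w, w.2, fun i => ⟨g.1 (t i), mem_image_of_mem _ (t i).2⟩, hx⟩

end LipschitzConvexHull

section Variation

variable {E : Type*}

theorem eVariationOn_Icc_le_of_lipschitzOnWith [PseudoEMetricSpace E] {f : ℝ → E} {C : ℝ≥0}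
    {a b : ℝ} (hf : LipschitzOnWith C f (Icc a b)) :
    eVariationOn f (Icc a b) ≤ C * ENNReal.ofReal (b - a) := by
  simpa only [Function.comp_id, eVariationOn_id_Icc] using
    hf.comp_eVariationOn_le (mapsTo_id (Icc a b))

theorem lowerSemicontinuous_eVariationOn {α : Type*} [LinearOrder α] [PseudoEMetricSpace E]
    (s : Set α) : LowerSemicontinuous fun f : α → E => eVariationOn f s := fun _ _ hv =>
  eVariationOn.lowerSemicontinuous_aux (fun x _ => (continuous_apply x).tendsto _) hv

theorem lipschitzOnWith_of_hasConstantSpeedOnWith [PseudoEMetricSpace E] {f : ℝ → E} {s : Set ℝ}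
    {l : ℝ≥0} (hf : HasConstantSpeedOnWith f s l) : LipschitzOnWith l f s := by
  intro x hx y hy
  wlog hxy : x ≤ y generalizing x y
  · rw [edist_comm, edist_comm x]
    exact this hy hx (le_of_not_ge hxy)
  calc edist (f x) (f y)
      ≤ eVariationOn f (s ∩ Icc x y) :=
        eVariationOn.edist_le f ⟨hx, left_mem_Icc.2 hxy⟩ ⟨hy, right_mem_Icc.2 hxy⟩
    _ = l * edist x y := by
        rw [hf hx hy, ENNReal.ofReal_mul l.coe_nonneg, edist_comm, edist_dist, Real.dist_eq,
          abs_of_nonneg (sub_nonneg.2 hxy), ENNReal.ofReal_coe_nnreal]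

theorem continuousOn_variationOnFromTo [PseudoMetricSpace E] {α : Type*} [LinearOrder α]
    [TopologicalSpace α] [OrderTopology α] {f : α → E} {s : Set α} {a : α}
    (hf : LocallyBoundedVariationOn f s) (hc : ContinuousOn f s) (ha : a ∈ s) :
    ContinuousOn (variationOnFromTo f s a) s := by
  intro x hx
  have hleft : ContinuousWithinAt (variationOnFromTo f s a) (s ∩ Iio x) x := by
    simpa [ContinuousWithinAt] using
      variationOnFromTo.tendsto_left ha hx hf ((hc x hx).mono inter_subset_left)
  have hright : ContinuousWithinAt (variationOnFromTo f s a) (s ∩ Ioi x) x := by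
    simpa [ContinuousWithinAt] using
      variationOnFromTo.tendsto_right ha hx hf ((hc x hx).mono inter_subset_left)
  refine (continuousWithinAt_insert_self.2 (hleft.union hright)).mono fun y hy => ?_
  rcases lt_trichotomy y x with h | h | h
  · exact .inr (.inl ⟨hy, h⟩)
  · exact .inl h
  · exact .inr (.inr ⟨hy, h⟩)

theorem image_variationOnFromTo_Icc [PseudoMetricSpace E] {f : ℝ → E} {a b : ℝ} (hab : a ≤ b)
    (hc : ContinuousOn f (Icc a b)) (hf : BoundedVariationOn f (Icc a b)) :
    variationOnFromTo f (Icc a b) a '' Icc a b = Icc 0 (eVariationOn f (Icc a b)).toReal := by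
  have ha : a ∈ Icc a b := left_mem_Icc.2 hab
  rw [(continuousOn_variationOnFromTo hf.locallyBoundedVariationOn hc ha).image_Icc_of_monotoneOn
      hab (variationOnFromTo.monotoneOn hf.locallyBoundedVariationOn ha),
    variationOnFromTo.self, variationOnFromTo.eq_of_le _ _ hab, inter_self]

theorem exists_lipschitzWith_image_Icc {C : ℝ≥0} {a b l : ℝ} (hab : a ≤ b) (hl : 0 ≤ l)
    (hC : l ≤ C * (b - a)) :
    ∃ θ : ℝ → ℝ, LipschitzWith C θ ∧ Monotone θ ∧ range θ ⊆ Icc 0 l ∧ θ a = 0 ∧ θ b = l ∧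
      θ '' Icc a b = Icc 0 l := by
  -- `θ` runs at speed `C` until it reaches `l`, and then rests there.
  let θ : ℝ → ℝ := fun t => projIcc 0 l hl (C * (t - a))
  have hθC : LipschitzWith C θ := by
    have hlin : LipschitzWith C fun t : ℝ => (C : ℝ) * (t - a) :=
      .of_dist_le_mul fun s t => by simp [Real.dist_eq, ← mul_sub, abs_mul]
    simpa [θ, Function.comp_def] using
      (LipschitzWith.subtype_val _).comp ((LipschitzWith.projIcc hl).comp hlin)
  have hmono : Monotone θ := fun s t hst =>
    monotone_projIcc hl (by gcongr)
  have ha : θ a = 0 := by simp [θ]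
  have hb : θ b = l := congrArg Subtype.val (projIcc_of_right_le hl hC)
  refine ⟨θ, hθC, hmono, range_subset_iff.2 fun t => Subtype.coe_prop _, ha, hb, ?_⟩
  rw [hθC.continuous.continuousOn.image_Icc_of_monotoneOn hab (hmono.monotoneOn _), ha, hb]

theorem exists_lipschitzWith_reparametrization [MetricSpace E] {β : ℝ → E} {C : ℝ≥0} {a b : ℝ}
    (hab : a ≤ b) (hβ : ContinuousOn β (Icc a b))
    (hC : eVariationOn β (Icc a b) ≤ C * ENNReal.ofReal (b - a)) :
    ∃ f : ℝ → E, LipschitzWith C f ∧ f a = β a ∧ f b = β b ∧ f '' Icc a b = β '' Icc a b ∧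
      eVariationOn f (Icc a b) = eVariationOn β (Icc a b) := by
  set I := Icc a b
  have ha : a ∈ I := left_mem_Icc.2 hab
  have hb : b ∈ I := right_mem_Icc.2 hab
  have hC' : C * ENNReal.ofReal (b - a) ≠ ⊤ := by finiteness
  have hbv : BoundedVariationOn β I := ne_top_of_le_ne_top hC' hC
  have hlbv := hbv.locallyBoundedVariationOn
  set l := (eVariationOn β I).toReal
  set v := variationOnFromTo β I a
  set g := naturalParameterization β I a
  have hv : v '' I = Icc 0 l := image_variationOnFromTo_Icc hab hβ hbv
  have hva : v a = 0 := variationOnFromTo.self ..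
  have hvb : v b = l := by simp [v, l, I, variationOnFromTo.eq_of_le _ _ hab]
  have hgv : EqOn (g ∘ v) β I := fun t ht =>
    edist_eq_zero.1 (edist_naturalParameterization_eq_zero hlbv ha ht)
  have hg : LipschitzOnWith 1 g (Icc 0 l) :=
    hv ▸ lipschitzOnWith_of_hasConstantSpeedOnWith
      (has_unit_speed_naturalParameterization β hlbv ha)
  have hl : l ≤ C * (b - a) := by
    simpa [hab] using ENNReal.toReal_mono hC' hC
  obtain ⟨θ, hθ, hθmono, hθrange, hθa, hθb, hθI⟩ :=
    exists_lipschitzWith_image_Icc hab ENNReal.toReal_nonneg hl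
  refine ⟨g ∘ θ, ?_, ?_, ?_, ?_, ?_⟩
  · simpa [lipschitzOnWith_univ] using
      hg.comp (lipschitzOnWith_univ.2 hθ) fun t _ => hθrange (mem_range_self t)
  · rw [← hgv ha, Function.comp_apply, Function.comp_apply, hθa, hva]
  · rw [← hgv hb, Function.comp_apply, Function.comp_apply, hθb, hvb]
  · rw [image_comp, hθI, ← hv, ← image_comp, hgv.image_eq]
  · rw [eVariationOn.comp_eq_of_monotoneOn g θ (hθmono.monotoneOn I), hθI, ← hv,
      ← eVariationOn.comp_eq_of_monotoneOn g v (variationOnFromTo.monotoneOn hlbv ha),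
      eVariationOn.eq_of_eqOn hgv]

end Variation

section Interpolation

variable {E : Type*} [NormedAddCommGroup E] [NormedSpace ℝ E]

theorem exists_contDiff_eqOn_finset {ι : Type*} (s : Finset ι) {v : ι → ℝ} (hv : InjOn v s)
    (p : ι → E) : ∃ g : ℝ → E, ContDiff ℝ ω g ∧ ∀ i ∈ s, g (v i) = p i := by
  classical
  refine ⟨fun t => ∑ i ∈ s, (Lagrange.basis s v i).aeval t • p i,
    ContDiff.sum fun i _ => (Polynomial.contDiff_aeval _ _).smul contDiff_const, fun i hi => ?_⟩
  simp only [Polynomial.coe_aeval_eq_eval]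
  rw [Finset.sum_eq_single_of_mem i hi, Lagrange.eval_basis_self hv hi, one_smul]
  intro j _ hji
  rw [Lagrange.eval_basis_of_ne hji hi, zero_smul]

theorem exists_contDiff_loop_subset_image (s : Finset E) {a b : ℝ} (hab : a < b) :
    ∃ γ : ℝ → E, ContDiff ℝ ω γ ∧ γ a = γ b ∧ (s : Set E) ⊆ γ '' Icc a b := by
  obtain ⟨v, hvs, hv⟩ : ∃ v : E → ℝ, (s : Set E) ⊆ v ⁻¹' Ioo a b ∧ InjOn v s :=
    s.finite_toSet.exists_injOn_of_encard_le (by simp [(Ioo_infinite hab).encard_eq])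
  -- The factor `w` closes up the interpolating curve, as it vanishes exactly at `a` and `b`.
  let w : ℝ → ℝ := fun t => (t - a) * (b - t)
  obtain ⟨g, hg, hgv⟩ := exists_contDiff_eqOn_finset s hv fun p => (w (v p))⁻¹ • p
  refine ⟨fun t => w t • g t, ?_, by simp [w], fun p hp => ⟨v p, Ioo_subset_Icc_self (hvs hp), ?_⟩⟩
  · exact ContDiff.smul (by fun_prop) hg
  · have hw : w (v p) ≠ 0 := (mul_pos (sub_pos.2 (hvs hp).1) (sub_pos.2 (hvs hp).2)).ne'
    simp only [hgv p hp, smul_inv_smul₀ hw]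

end Interpolation

section EnclosingCurve

variable {E : Type*} [NormedAddCommGroup E] [NormedSpace ℝ E]

/-- A closed rectifiable curve, parametrized by `[a, b]`, whose convex hull contains `A`. For `A`
the unit sphere of `E3` this is `IsInspection`. As there, the values of `γ` off `[a, b]` are
irrelevant. -/
structure IsEnclosingCurve (A : Set E) (a b : ℝ) (γ : ℝ → E) : Prop where
  continuousOn : ContinuousOn γ (Icc a b)
  closed : γ a = γ b
  boundedVariationOn : BoundedVariationOn γ (Icc a b)
  subset_convexHull : A ⊆ convexHull ℝ (γ '' Icc a b)

/-- The competitors of the direct method: curves closing up over `[a, b]` whose convex hull contains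
`A`, with a uniform Lipschitz constant `C`. They are required to be Lipschitz on all of `ℝ`, so that
the set is compact for pointwise convergence on `ℝ`. -/
def lipschitzLoops (A : Set E) (a b : ℝ) (C : ℝ≥0) : Set (ℝ → E) :=
  {f | LipschitzWith C f ∧ f a = f b ∧ A ⊆ convexHull ℝ (f '' Icc a b)}

variable {A : Set E} {a b : ℝ} {C : ℝ≥0}

theorem isInspection_iff_isEnclosingCurve {γ : ℝ → E3} :
    IsInspection a b γ ↔ IsEnclosingCurve (sphere 0 1) a b γ :=
  ⟨fun ⟨h₁, h₂, h₃, h₄⟩ => ⟨h₁, h₂, h₃, h₄⟩, fun ⟨h₁, h₂, h₃, h₄⟩ => ⟨h₁, h₂, h₃, h₄⟩⟩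

theorem eVariationOn_le_of_mem_lipschitzLoops {f : ℝ → E} (hf : f ∈ lipschitzLoops A a b C) :
    eVariationOn f (Icc a b) ≤ C * ENNReal.ofReal (b - a) :=
  eVariationOn_Icc_le_of_lipschitzOnWith hf.1.lipschitzOnWith

theorem isEnclosingCurve_of_mem_lipschitzLoops {f : ℝ → E} (hf : f ∈ lipschitzLoops A a b C) :
    IsEnclosingCurve A a b f where
  continuousOn := hf.1.continuous.continuousOn
  closed := hf.2.1
  boundedVariationOn :=
    ne_top_of_le_ne_top (by finiteness) (eVariationOn_le_of_mem_lipschitzLoops hf)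
  subset_convexHull := hf.2.2

theorem IsEnclosingCurve.exists_mem_lipschitzLoops {β : ℝ → E} (hβ : IsEnclosingCurve A a b β)
    (hab : a ≤ b) (hC : eVariationOn β (Icc a b) ≤ C * ENNReal.ofReal (b - a)) :
    ∃ f ∈ lipschitzLoops A a b C, eVariationOn f (Icc a b) = eVariationOn β (Icc a b) := by
  obtain ⟨f, hfC, hfa, hfb, himage, hlength⟩ :=
    exists_lipschitzWith_reparametrization hab hβ.continuousOn hC
  refine ⟨f, ⟨hfC, ?_, ?_⟩, hlength⟩
  · rw [hfa, hfb, hβ.closed]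
  · rw [himage]
    exact hβ.subset_convexHull

theorem exists_isEnclosingCurve [FiniteDimensional ℝ E] (hA : Bornology.IsBounded A)
    (hab : a < b) : ∃ γ, IsEnclosingCurve A a b γ := by
  have : ProperSpace E := FiniteDimensional.proper_real E
  obtain ⟨R, hR⟩ := hA.subset_closedBall 0
  obtain ⟨u, hu, -⟩ :=
    (convex_closedBall (0 : E) R).exists_subset_interior_convexHull_finset_of_isCompact
      (isCompact_closedBall 0 R) Filter.univ_mem
  obtain ⟨γ, hγ, hclosed, huγ⟩ := exists_contDiff_loop_subset_image u hab
  obtain ⟨K, hK⟩ := hγ.contDiffOn.exists_lipschitzOnWith (by simp) (convex_Icc a b) isCompact_Icc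
  exact ⟨γ, hγ.continuous.continuousOn, hclosed,
    ne_top_of_le_ne_top (by finiteness) (eVariationOn_Icc_le_of_lipschitzOnWith hK),
    (hR.trans (hu.trans interior_subset)).trans (convexHull_mono huγ)⟩

theorem exists_nonempty_lipschitzLoops [FiniteDimensional ℝ E] (hA : Bornology.IsBounded A)
    (hab : a < b) : ∃ C, (lipschitzLoops A a b C).Nonempty := by
  obtain ⟨γ, hγ⟩ := exists_isEnclosingCurve hA hab
  let C := (eVariationOn γ (Icc a b)).toNNReal / (b - a).toNNReal
  have hC : eVariationOn γ (Icc a b) ≤ C * ENNReal.ofReal (b - a) := by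
    have hba : (b - a).toNNReal ≠ 0 := by simpa using hab
    rw [ENNReal.ofReal, ← ENNReal.coe_mul, div_mul_cancel₀ _ hba,
      ENNReal.coe_toNNReal hγ.boundedVariationOn]
  obtain ⟨f, hf, -⟩ := hγ.exists_mem_lipschitzLoops hab.le hC
  exact ⟨C, f, hf⟩

theorem isCompact_lipschitzLoops [FiniteDimensional ℝ E] (hA : A.Nonempty) (a b : ℝ) (C : ℝ≥0) :
    IsCompact (lipschitzLoops A a b C) := by
  have : ProperSpace E := FiniteDimensional.proper_real E
  obtain ⟨x₀, hx₀⟩ := hA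
  choose r hr using fun t : ℝ => (isBounded_Icc a b).subset_closedBall t
  refine (isCompact_univ_pi fun t => isCompact_closedBall x₀ (C * r t)).of_isClosed_subset ?_ ?_
  · have hloops : lipschitzLoops A a b C = {f | f a = f b} ∩
        ⋂ x ∈ A, {f | LipschitzWith C f ∧ x ∈ convexHull ℝ (f '' Icc a b)} := by
      ext f
      simp only [lipschitzLoops, mem_inter_iff, mem_iInter, mem_ofPred_eq]
      exact ⟨fun h => ⟨h.2.1, fun x hx => ⟨h.1, h.2.2 hx⟩⟩,
        fun h => ⟨(h.2 x₀ hx₀).1, h.1, fun x hx => (h.2 x hx).2⟩⟩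
    rw [hloops]
    exact (isClosed_eq (continuous_apply a) (continuous_apply b)).inter
      (isClosed_biInter fun x _ =>
        isClosed_setOfPred_lipschitzWith_mem_convexHull_image C isCompact_Icc x)
  · intro f hf t _
    exact mem_closedBall_comm.1
      (convexHull_image_subset_closedBall_of_lipschitzWith hf.1 (hr t) (hf.2.2 hx₀))

theorem exists_minimal_inspection_curve_general [FiniteDimensional ℝ E]
    (hA : Bornology.IsBounded A) (hab : a < b) :
    ∃ γ : ℝ → E, IsEnclosingCurve A a b γ ∧ ∀ β : ℝ → E, IsEnclosingCurve A a b β →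
      eVariationOn γ (Icc a b) ≤ eVariationOn β (Icc a b) := by
  rcases A.eq_empty_or_nonempty with rfl | hne
  · have hconst : eVariationOn (fun _ => (0 : E)) (Icc a b) = 0 :=
      eVariationOn.constant_on (subsingleton_singleton.anti (image_subset_iff.2 fun _ _ => rfl))
    exact ⟨fun _ => 0, ⟨continuousOn_const, rfl, by simp [BoundedVariationOn, hconst],
      empty_subset _⟩, fun β _ => hconst ▸ zero_le⟩
  obtain ⟨C, hC⟩ := exists_nonempty_lipschitzLoops hA hab
  obtain ⟨γ, hγ, hmin⟩ := ((lowerSemicontinuous_eVariationOn (Icc a b)).lowerSemicontinuousOn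
    (lipschitzLoops A a b C)).exists_isMinOn hC (isCompact_lipschitzLoops hne a b C)
  refine ⟨γ, isEnclosingCurve_of_mem_lipschitzLoops hγ, fun β hβ => ?_⟩
  rcases le_total (eVariationOn β (Icc a b)) (C * ENNReal.ofReal (b - a)) with h | h
  · obtain ⟨f, hf, hlength⟩ := hβ.exists_mem_lipschitzLoops hab.le h
    exact hlength ▸ hmin hf
  · exact (eVariationOn_le_of_mem_lipschitzLoops hγ).trans h

end EnclosingCurve

/-- **Existence of a minimal inspection curve.** There is an inspection curve on `[0,1]`
whose length is least among all inspection curves on `[0,1]`. -/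
theorem exists_minimal_inspection_curve :
    ∃ γ : ℝ → E3, IsInspection 0 1 γ ∧
      ∀ β : ℝ → E3, IsInspection 0 1 β →
        eVariationOn γ (Set.Icc 0 1) ≤ eVariationOn β (Set.Icc 0 1) := by
  simpa only [isInspection_iff_isEnclosingCurve] using
    exists_minimal_inspection_curve_general isBounded_sphere zero_lt_one
end
end
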